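/- arXiv:2203.10293 — 6 statements merged into one kernel-verified Lean document; each statement's English description precedes it below -/
import Mathlib

section
/- (Canonical Ramsey Theorem) For every natural number n ≥ 1 and every partition P of [ω]^n (P may be infinite), there exists an infinite set Y ⊆ ℕ that is canonical for P. -/
/-! Common definitions. -/

/-- The `i`-th smallest element of a finite set of naturals (default 0 if `i ≥ |s|`). -/
def nth (s : Finset ℕ) (i : ℕ) : ℕ := (s.sort (· ≤ ·)).getD i 0

/-- `[ω]^n` : the set of `n`-element subsets of `ℕ` (as `Finset`s). -/
def cube (n : ℕ) : Set (Finset ℕ) := {s | s.card = n}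

/-- `P` is a partition of `Z` (one member may be empty). -/
def IsPartitionOn (Z : Set (Finset ℕ)) (P : Set (Set (Finset ℕ))) : Prop :=
  ⋃₀ P = Z ∧ ∀ A ∈ P, ∀ B ∈ P, A ∩ B = ∅ ∨ A = B

/-- The equivalence relation `≈_P` induced by a partition `P`. -/
def EquivP (P : Set (Set (Finset ℕ))) (p q : Finset ℕ) : Prop := ∃ A ∈ P, p ∈ A ∧ q ∈ A

/-- `X` is `I`-canonical for a partition `P` of `[ω]^n`. -/
def ICanon (n : ℕ) (P : Set (Set (Finset ℕ))) (I : Set ℕ) (X : Set ℕ) : Prop :=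
  ∀ p q : Finset ℕ, ↑p ⊆ X → p.card = n → ↑q ⊆ X → q.card = n →
    (EquivP P p q ↔ ∀ i ∈ I, nth p i = nth q i)

/-- `X` is canonical for a partition `P` of `[ω]^n`. -/
def Canon (n : ℕ) (P : Set (Set (Finset ℕ))) (X : Set ℕ) : Prop :=
  ∃ I : Set ℕ, I ⊆ Set.Iio n ∧ ICanon n P I X

/-- `X` is homogeneous for a partition `P` of `[ω]^n`. -/
def Homog (n : ℕ) (P : Set (Set (Finset ℕ))) (X : Set ℕ) : Prop :=
  ∃ A ∈ P, ∀ s : Finset ℕ, ↑s ⊆ X → s.card = n → s ∈ A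

/-- `[2n]^n` : the `n`-element subsets of `{0, …, 2n-1}`. -/
def idx (n : ℕ) : Finset (Finset ℕ) := Finset.powersetCard n (Finset.range (2 * n))

/-- The set `Q_{pq} = { z ∈ [ω]^{2n} : {z_[i] : i ∈ p} ≈_P {z_[i] : i ∈ q} }`. -/
def Qpq (n : ℕ) (P : Set (Set (Finset ℕ))) (p q : Finset ℕ) : Set (Finset ℕ) :=
  {z | z.card = 2 * n ∧ EquivP P (p.image (nth z)) (q.image (nth z))}

/-- `P*` : the atoms of the field of subsets of `[ω]^{2n}` generated by the sets `Q_{pq}`. -/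
def Atoms (n : ℕ) (P : Set (Set (Finset ℕ))) : Set (Set (Finset ℕ)) :=
  {Q | Q.Nonempty ∧ ∃ S : Finset ℕ → Finset ℕ → Set (Finset ℕ),
    (∀ p ∈ idx n, ∀ q ∈ idx n, S p q = Qpq n P p q ∨ S p q = cube (2 * n) \ Qpq n P p q) ∧
    Q = ⋂ p ∈ idx n, ⋂ q ∈ idx n, S p q}

/-- `I_{pq} = { i < n : p_[i] = q_[i] }`. -/
def Ipq (n : ℕ) (p q : Finset ℕ) : Set ℕ := {i | i < n ∧ nth p i = nth q i}

/-- `I(Q) = ⋂ { I_{pq} : p, q ∈ [2n]^n, Q ⊆ Q_{pq} }`. -/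
def IofQ (n : ℕ) (P : Set (Set (Finset ℕ))) (Q : Set (Finset ℕ)) : Set ℕ :=
  ⋂ p ∈ idx n, ⋂ q ∈ idx n, ⋂ (_ : Q ⊆ Qpq n P p q), Ipq n p q

/-- `ρ(a,b) = |(a △ b) ∩ X|`, identifying `a` with `{0, …, a-1}`. -/
noncomputable def rho (X : Set ℕ) (a b : ℕ) : ℕ := (X ∩ Set.Ico (min a b) (max a b)).ncard

/-- The sparsity `d(x) = min { ρ(a,b) : a, b ∈ x ∪ {e}, a ≠ b }` (with `d(∅) = ⊤ = ω`). -/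
noncomputable def sparsity (X : Set ℕ) (e : ℕ) (x : Finset ℕ) : ℕ∞ :=
  ⨅ a ∈ (x ∪ {e} : Finset ℕ), ⨅ b ∈ (x ∪ {e} : Finset ℕ), ⨅ _ : a ≠ b, (rho X a b : ℕ∞)

/-- `r(x,y) = max_{b ∈ y} min { ρ(a,b) : a ∈ x ∪ {e}, a ≤ b }`. -/
noncomputable def rfun (X : Set ℕ) (e : ℕ) (x y : Finset ℕ) : ℕ :=
  y.sup fun b => sInf ((fun a => rho X a b) '' {a : ℕ | a ∈ (x ∪ {e} : Finset ℕ) ∧ a ≤ b})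

/-- `x →_{pq} y` : there is `z ∈ [X]^{2n}` with `{z_[i] : i ∈ p} = x` and `{z_[i] : i ∈ q} = y`. -/
def Arrow (X : Set ℕ) (n : ℕ) (p q x y : Finset ℕ) : Prop :=
  ∃ z : Finset ℕ, ↑z ⊆ X ∧ z.card = 2 * n ∧ p.image (nth z) = x ∧ q.image (nth z) = y

/-- `x ↔_Q y` : `x →_{pq} y` for some `p, q ∈ [2n]^n` with `Q ⊆ Q_{pq}`. -/
def RelQ (n : ℕ) (P : Set (Set (Finset ℕ))) (Q : Set (Finset ℕ)) (X : Set ℕ)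
    (x y : Finset ℕ) : Prop :=
  ∃ p ∈ idx n, ∃ q ∈ idx n, Q ⊆ Qpq n P p q ∧ Arrow X n p q x y

/-- `x_0, …, x_l` is a `t`-cascade. -/
def IsCascade (n : ℕ) (P : Set (Set (Finset ℕ))) (Q : Set (Finset ℕ)) (X : Set ℕ) (e : ℕ)
    (t l : ℕ) (x : ℕ → Finset ℕ) : Prop :=
  (∀ i ≤ l, ↑(x i) ⊆ X \ {e} ∧ (x i).card = n) ∧
  ∀ i < l, ((n ^ (t - 2 * i) : ℕ) : ℕ∞) ≤ sparsity X e (x i) ∧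
    rfun X e (x i) (x (i + 1)) ≤ n ^ (t - 2 * i - 1) ∧
    RelQ n P Q X (x i) (x (i + 1))

/-- The `n`-fold Fubini power `u ⊗ ⋯ ⊗ u` of an ultrafilter on `ℕ`, as an
ultrafilter on `Fin n → ℕ`. -/
noncomputable def tensorPow (u : Ultrafilter ℕ) : (n : ℕ) → Ultrafilter (Fin n → ℕ)
  | 0 => pure (fun i => i.elim0)
  | n + 1 => u.bind fun a => (tensorPow u n).map (Fin.cons a)

/-- The diagonal ultrafilter extension `f̃(u, u, …, u)` of `f : ℕ^n → ℕ`. -/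
noncomputable def diagExt {n : ℕ} (f : (Fin n → ℕ) → ℕ) (u : Ultrafilter ℕ) : Ultrafilter ℕ :=
  (tensorPow u n).map f

/-- The Rudin–Keisler preorder. -/
def RKle (u v : Ultrafilter ℕ) : Prop := ∃ h : ℕ → ℕ, v.map h = u

/-- Rudin–Keisler equivalence. -/
def RKeq (u v : Ultrafilter ℕ) : Prop := RKle u v ∧ RKle v u

/-- `u` is nonprincipal: it contains no finite set. -/
def Nonprincipal (u : Ultrafilter ℕ) : Prop := ∀ S : Set ℕ, S.Finite → S ∉ u

/-- `u` is a Ramsey ultrafilter. -/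
def IsRamseyU (u : Ultrafilter ℕ) : Prop :=
  Nonprincipal u ∧ ∀ n : ℕ, 1 ≤ n → ∀ P : Set (Set (Finset ℕ)),
    IsPartitionOn (cube n) P → P.Finite → ∃ X ∈ u, Homog n P X

/-- `f : ℕ^n → ℕ` is selectively upward injective on `X` w.r.t. the index set `I`
(`I = ∅` gives "upward constant"). -/
def SelUpInjWrt (n : ℕ) (f : (Fin n → ℕ) → ℕ) (X : Set ℕ) (I : Set (Fin n)) : Prop :=
  ∀ x y : Fin n → ℕ, (∀ i, x i ∈ X) → (∀ i, y i ∈ X) → StrictMono x → StrictMono y →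
    (f x = f y ↔ ∀ i ∈ I, x i = y i)

section RamseyAux

/-- Iterated ultrafilter limit of a colouring of finite sets. -/
noncomputable def limCol {κ : Type} [Finite κ] (c : Finset ℕ → κ) : ℕ → Finset ℕ → κ
  | 0, s => c s
  | j + 1, s => Classical.epsilon (h := ⟨c ∅⟩)
      (fun k => ∀ᶠ x in (Filter.hyperfilter ℕ : Filter ℕ), limCol c j (insert x s) = k)

theorem limCol_spec {κ : Type} [Finite κ] (c : Finset ℕ → κ) (j : ℕ) (s : Finset ℕ) :
    ∀ᶠ x in (Filter.hyperfilter ℕ : Filter ℕ),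
      limCol c j (insert x s) = limCol c (j + 1) s := by
  have h : ∃ k, ∀ᶠ x in (Filter.hyperfilter ℕ : Filter ℕ), limCol c j (insert x s) = k := by
    have := (Ultrafilter.eventually_exists_iff (f := Filter.hyperfilter ℕ)
      (P := fun (k : κ) x => limCol c j (insert x s) = k)).1 (by simp)
    exact this
  have := Classical.epsilon_spec h
  simpa only [limCol] using this

theorem ramsey_set {κ : Type} [Finite κ] (m : ℕ) (c : Finset ℕ → κ) :
    ∃ Y : Set ℕ, Y.Infinite ∧ ∃ k, ∀ t : Finset ℕ, ↑t ⊆ Y → t.card = m → c t = k := by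
  classical
  set k := limCol c m ∅ with hk
  let Good : Finset ℕ → Prop := fun s => ∀ t ⊆ s, ∀ j, j + t.card = m → limCol c j t = k
  have step : ∀ s, Good s → ∃ x, (∀ y ∈ s, y < x) ∧ Good (insert x s) := by
    intro s hs
    have h1 : ∀ᶠ x in (Filter.hyperfilter ℕ : Filter ℕ), ∀ t ∈ s.powerset, ∀ j ∈ Finset.range m,
        limCol c j (insert x t) = limCol c (j + 1) t := by
      rw [Filter.eventually_all_finset]
      intro t _
      rw [Filter.eventually_all_finset]
      intro j _
      exact limCol_spec c j t
    have h2 : ∀ᶠ x in (Filter.hyperfilter ℕ : Filter ℕ), ∀ y ∈ s, y < x := by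
      rw [Filter.eventually_all_finset]
      intro y _
      exact Nat.hyperfilter_le_atTop (Filter.eventually_gt_atTop y)
    obtain ⟨x, hx1, hx2⟩ := (h1.and h2).exists
    refine ⟨x, hx2, ?_⟩
    intro t ht j hj
    by_cases hxt : x ∈ t
    · have hsub : t.erase x ⊆ s := by
        intro y hy
        have := ht (Finset.mem_of_mem_erase hy)
        have hne := Finset.ne_of_mem_erase hy
        simpa [hne] using this
      have hc := Finset.card_erase_add_one hxt
      have := hx1 (t.erase x) (by simpa using hsub) j (by simp; omega)
      rw [Finset.insert_erase hxt] at this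
      rw [this]
      exact hs _ hsub _ (by omega)
    · refine hs t ?_ j hj
      exact (Finset.subset_insert_iff_of_notMem hxt).1 ht
  have g0 : Good ∅ := by
    intro t ht j hj
    have : t = ∅ := Finset.subset_empty.1 ht
    subst this
    simp at hj
    rw [hj]
  choose nx hnx1 hnx2 using step
  let S : ℕ → {s // Good s} := fun i =>
    Nat.rec ⟨∅, g0⟩ (fun _ s => ⟨insert (nx s.1 s.2) s.1, hnx2 s.1 s.2⟩) i
  let h : ℕ → ℕ := fun i => nx (S i).1 (S i).2
  have hS : ∀ i, (S (i+1)).1 = insert (h i) (S i).1 := fun i => rfl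
  have hmono : Monotone (fun i => (S i).1) := by
    refine monotone_nat_of_le_succ fun i => ?_
    show (S i).1 ⊆ (S (i+1)).1
    rw [hS]; exact Finset.subset_insert _ _
  have hin : ∀ i, h i ∈ (S (i+1)).1 := fun i => by rw [hS]; simp
  have hh : StrictMono h := by
    refine strictMono_nat_of_lt_succ fun i => ?_
    exact hnx1 _ _ _ (hin i)
  refine ⟨Set.range h, Set.infinite_range_of_injective hh.injective, k, ?_⟩
  intro t ht hc
  have : ∃ N, t ⊆ (S N).1 := by
    clear hc
    induction t using Finset.induction_on with
    | empty => exact ⟨0, by simp⟩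
    | insert a t _ ih =>
      rw [Finset.coe_insert, Set.insert_subset_iff] at ht
      obtain ⟨N, hN⟩ := ih ht.2
      obtain ⟨i, rfl⟩ := ht.1
      refine ⟨max N (i+1), ?_⟩
      rw [Finset.insert_subset_iff]
      exact ⟨hmono (le_max_right _ _) (hin i), hN.trans (hmono (le_max_left _ _))⟩
  obtain ⟨N, hN⟩ := this
  exact (S N).2 t hN 0 (by omega)

theorem nth_eq_emb {m : ℕ} (s : Finset ℕ) (hs : s.card = m) (i : Fin m) :
    nth s i = s.orderEmbOfFin hs i := by
  have : (i : ℕ) < (s.sort (· ≤ ·)).length := by simp [hs]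
  rw [Finset.orderEmbOfFin_apply, nth, List.getD_eq_getElem _ _ this]
  rfl

theorem nth_image {m : ℕ} (z : Fin m → ℕ) (hz : StrictMono z) (i : Fin m) :
    nth (Finset.univ.image z) i = z i := by
  have hc : (Finset.univ.image z).card = m := by
    rw [Finset.card_image_of_injective _ hz.injective]; simp
  rw [nth_eq_emb _ hc]
  rw [← Finset.orderEmbOfFin_unique hc (f := z) (by simp) hz]

theorem exists_tuple {m : ℕ} (s : Finset ℕ) (hs : s.card = m) :
    ∃ z : Fin m → ℕ, StrictMono z ∧ Finset.univ.image z = s :=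
  ⟨s.orderEmbOfFin hs, (s.orderEmbOfFin hs).strictMono, by simp⟩

theorem ramsey_inv (n : ℕ) (R : (Fin n → ℕ) → (Fin n → ℕ) → Prop) :
    ∃ h : ℕ → ℕ, StrictMono h ∧ ∀ φ : ℕ → ℕ, StrictMono φ → ∀ p q : Fin n → ℕ,
      (R (h ∘ φ ∘ p) (h ∘ φ ∘ q) ↔ R (h ∘ p) (h ∘ q)) := by
  classical
  obtain ⟨Y, hY, k, hk⟩ := ramsey_set (2 * n) (fun s =>
    ({ab | R (fun i => nth s (ab.1 i)) (fun i => nth s (ab.2 i))} :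
      Set ((Fin n → Fin (2 * n)) × (Fin n → Fin (2 * n)))))
  have := hY.to_subtype
  refine ⟨fun i => Nat.orderEmbeddingOfSet Y i, (Nat.orderEmbeddingOfSet Y).strictMono, ?_⟩
  set h : ℕ → ℕ := fun i => Nat.orderEmbeddingOfSet Y i with hdef
  have hh : StrictMono h := (Nat.orderEmbeddingOfSet Y).strictMono
  have hhY : ∀ i, h i ∈ Y := fun i => by
    rw [← Nat.orderEmbeddingOfSet_range Y]; exact ⟨i, rfl⟩
  have key : ∀ z : Fin (2 * n) → ℕ, StrictMono z → ∀ a b : Fin n → Fin (2 * n),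
      (R (h ∘ z ∘ a) (h ∘ z ∘ b) ↔ (a, b) ∈ k) := by
    intro z hz a b
    have hc : (Finset.univ.image (h ∘ z)).card = 2 * n := by
      rw [Finset.card_image_of_injective _ (hh.comp hz).injective]; simp
    rw [← hk (Finset.univ.image (h ∘ z)) (by
      intro x hx
      simp only [Finset.coe_image, Finset.coe_univ, Set.image_univ] at hx
      obtain ⟨i, rfl⟩ := hx
      exact hhY _) hc]
    simp only [Set.mem_ofPred_eq, nth_image _ (hh.comp hz)]
    rfl
  intro φ hφ p q
  obtain ⟨T, hT, hTc⟩ := Infinite.exists_superset_card_eq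
    (Finset.univ.image p ∪ Finset.univ.image q) (2 * n) (by
      refine (Finset.card_union_le _ _).trans ?_
      have h1 := Finset.card_image_le (s := Finset.univ) (f := p)
      have h2 := Finset.card_image_le (s := Finset.univ) (f := q)
      simp at h1 h2
      omega)
  obtain ⟨z, hz, rfl⟩ := exists_tuple T hTc
  have ha : ∀ i, ∃ a, z a = p i := fun i => by
    have := hT (Finset.mem_union_left _ (Finset.mem_image_of_mem p (Finset.mem_univ i)))
    simpa using this
  have hb : ∀ i, ∃ a, z a = q i := fun i => by
    have := hT (Finset.mem_union_right _ (Finset.mem_image_of_mem q (Finset.mem_univ i)))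
    simpa using this
  choose a ha using ha
  choose b hb using hb
  obtain rfl : z ∘ a = p := funext ha
  obtain rfl : z ∘ b = q := funext hb
  rw [key z hz a b]
  exact key (φ ∘ z) (hφ.comp hz) a b

/-- Abstract canonicity for order-invariant equivalence relations on increasing tuples. -/
theorem canon_inv (n : ℕ) (E : (Fin n → ℕ) → (Fin n → ℕ) → Prop)
    (hr : ∀ p, StrictMono p → E p p)
    (hs : ∀ p q, E p q → E q p)
    (ht : ∀ p q r, E p q → E q r → E p r)
    (hinv : ∀ φ : ℕ → ℕ, StrictMono φ → ∀ p q, (E (φ ∘ p) (φ ∘ q) ↔ E p q)) :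
    ∃ I : Set (Fin n), ∀ p q, StrictMono p → StrictMono q →
      (E p q ↔ ∀ i ∈ I, p i = q i) := by
  classical
  -- a canonical pair differing only in coordinate `i`
  let D : Fin n → Prop := fun i => ∀ p q, StrictMono p → StrictMono q →
    (∀ j, j ≠ i → p j = q j) → E p q
  have std : ∀ (i : Fin n) p q, StrictMono p → StrictMono q → (∀ j, j ≠ i → p j = q j) →
      p i < q i → (E p q ↔ E (fun j => if j ≤ i then (j : ℕ) else j + 1)
        (fun j => if j < i then (j : ℕ) else j + 1)) := by
    intro i p q hp hq hpq hlt
    let φ : ℕ → ℕ := fun k => if h : k ≤ i then p ⟨k, by omega⟩ else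
      if h' : k - 1 < n then q ⟨k - 1, h'⟩ else k + ∑ j, q j
    have hφ : StrictMono φ := by
      refine strictMono_nat_of_lt_succ fun k => ?_
      have hi := i.2
      rcases lt_trichotomy k (i : ℕ) with h | h | h
      · have h1 : k ≤ (i : ℕ) := by omega
        have h2 : k + 1 ≤ (i : ℕ) := by omega
        simp only [φ, h1, h2, dif_pos]
        exact hp (by simp [Fin.lt_def])
      · subst h
        simpa [φ] using hlt
      · have h1 : ¬ k ≤ (i : ℕ) := by omega
        have h2 : ¬ k + 1 ≤ (i : ℕ) := by omega
        by_cases h3 : k < n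
        · have h4 : k - 1 < n := by omega
          simp only [φ, h1, h2, dif_neg, not_false_eq_true, h4, dif_pos, Nat.add_sub_cancel, h3]
          exact hq (by simp only [Fin.lt_def]; omega)
        · by_cases h4 : k - 1 < n
          · simp only [φ, h1, h2, dif_neg, not_false_eq_true, h4, dif_pos,
              Nat.add_sub_cancel, h3]
            have := Finset.single_le_sum (f := q) (fun j _ => Nat.zero_le _)
              (Finset.mem_univ (⟨k - 1, h4⟩ : Fin n))
            omega
          · simp only [φ, h1, h2, dif_neg, not_false_eq_true, h4, Nat.add_sub_cancel, h3]
            omega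
    have ep : φ ∘ (fun j : Fin n => if j ≤ i then (j : ℕ) else j + 1) = p := by
      funext j
      by_cases h : j ≤ i
      · have h' : (j : ℕ) ≤ i := h
        simp [φ, h]
      · have h' : ¬ (j : ℕ) + 1 ≤ i := fun h' => h (by simp only [Fin.le_def]; omega)
        simp only [φ, Function.comp, h, if_false, h', dif_neg, not_false_eq_true,
          Nat.add_sub_cancel, j.2, dif_pos]
        exact (hpq j (fun e => h e.le)).symm
    have eq : φ ∘ (fun j : Fin n => if j < i then (j : ℕ) else j + 1) = q := by
      funext j
      by_cases h : j < i
      · have h' : (j : ℕ) ≤ i := h.le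
        simp only [φ, Function.comp, h, if_true, h', dif_pos]
        exact hpq j h.ne
      · have h' : ¬ (j : ℕ) + 1 ≤ i := fun h' => h (by simp only [Fin.lt_def]; omega)
        simp only [φ, Function.comp, h, if_false, h', dif_neg, not_false_eq_true,
          Nat.add_sub_cancel, j.2, dif_pos]
    have := hinv φ hφ (fun j : Fin n => if j ≤ i then (j : ℕ) else j + 1)
      (fun j : Fin n => if j < i then (j : ℕ) else j + 1)
    rw [ep, eq] at this
    exact this
  -- one pair suffices
  have one : ∀ i p q, StrictMono p → StrictMono q → (∀ j, j ≠ i → p j = q j) → p i < q i →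
      E p q → D i := by
    intro i p q hp hq hpq hlt hE
    have e0 := (std i p q hp hq hpq hlt).1 hE
    intro p' q' hp' hq' hpq'
    rcases lt_trichotomy (p' i) (q' i) with h | h | h
    · exact (std i p' q' hp' hq' hpq' h).2 e0
    · have : p' = q' := by
        funext j
        by_cases hj : j = i
        · rw [hj, h]
        · exact hpq' j hj
      rw [this]; exact hr _ hq'
    · exact hs _ _ ((std i q' p' hq' hp' (fun j hj => (hpq' j hj).symm) h).2 e0)
  have dbl : StrictMono (fun x : ℕ => 2 * x) := fun a b h => by
    show 2 * a < 2 * b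
    omega
  -- shifting coordinate `i` of the doubled tuple
  have shift : ∀ (p : Fin n → ℕ) (i : Fin n), StrictMono p →
      StrictMono (fun j => if j = i then 2 * p j + 1 else 2 * p j) := by
    intro p i hp a b hab
    have := hp hab
    show (if a = i then 2 * p a + 1 else 2 * p a) < (if b = i then 2 * p b + 1 else 2 * p b)
    split_ifs <;> omega
  have lemA : ∀ p q i, StrictMono p → StrictMono q → E p q → (∀ j, q j ≠ p i) → D i := by
    intro p q i hp hq hE hne
    have e1 : E ((fun x => 2 * x) ∘ p) ((fun x => 2 * x) ∘ q) := (hinv _ dbl p q).2 hE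
    let φ : ℕ → ℕ := fun x => if x = p i then 2 * x + 1 else 2 * x
    have hφ : StrictMono φ := by
      intro a b hab
      show (if a = p i then 2 * a + 1 else 2 * a) < (if b = p i then 2 * b + 1 else 2 * b)
      split_ifs <;> omega
    have e2 : E (φ ∘ p) (φ ∘ q) := (hinv _ hφ p q).2 hE
    have e3 : φ ∘ q = (fun x => 2 * x) ∘ q := by
      funext j
      simp [φ, hne j]
    rw [e3] at e2
    refine one i _ _ (dbl.comp hp) (hφ.comp hp) ?_ ?_ (ht _ _ _ e1 (hs _ _ e2))
    · intro j hj
      have : p j ≠ p i := fun h => hj (hp.injective h)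
      simp [φ, this]
    · simp [φ]
  have lemB : ∀ N : ℕ, ∀ i : Fin n, (i : ℕ) = N → ¬ D i → ∀ p q, StrictMono p → StrictMono q →
      E p q → p i = q i := by
    intro N
    induction N using Nat.strong_induction_on with
    | _ N ih =>
    intro i hi hD
    have main : ∀ p q, StrictMono p → StrictMono q → E p q → ¬ p i < q i := by
      intro p q hp hq hE hlt
      have : ∃ j, q j = p i := by
        by_contra hcon
        push Not at hcon
        exact hD (lemA p q i hp hq hE hcon)
      obtain ⟨j, hj⟩ := this
      have hji : j < i := by
        rw [← hq.lt_iff_lt]; omega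
      have hDj : D j := by
        by_contra hDj
        have h1 := ih j (by rw [← hi]; exact hji) j rfl hDj p q hp hq hE
        have h2 := hp hji
        omega
      have e1 : E ((fun x => 2 * x) ∘ p) ((fun x => 2 * x) ∘ q) := (hinv _ dbl p q).2 hE
      have e2 : E ((fun x => 2 * x) ∘ q) (fun k => if k = j then 2 * q k + 1 else 2 * q k) := by
        refine hDj _ _ (dbl.comp hq) (shift q j hq) ?_
        intro k hk
        simp [hk]
      refine hD (lemA _ _ i (dbl.comp hp) (shift q j hq) (ht _ _ _ e1 e2) ?_)
      intro k
      show (if k = j then 2 * q k + 1 else 2 * q k) ≠ 2 * p i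
      split_ifs with hk
      · omega
      · have : q k ≠ q j := fun h => hk (hq.injective h)
        omega
    intro p q hp hq hE
    have h1 := main p q hp hq hE
    have h2 := main q p hq hp (hs _ _ hE)
    omega
  -- raising coordinates
  have raise : ∀ p r, StrictMono p → StrictMono r → (∀ i, p i ≤ r i) →
      (∀ i, ¬ D i → p i = r i) → E p r := by
    intro p r hp hr' hle hag
    let w : ℕ → Fin n → ℕ := fun m j => if (j : ℕ) < m then p j else r j
    have hw : ∀ m, StrictMono (w m) := by
      intro m a b hab
      have h1 := hp hab
      have h2 := hr' hab
      have h3 := hle a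
      have h4 : (a : ℕ) < b := hab
      show (if (a : ℕ) < m then p a else r a) < (if (b : ℕ) < m then p b else r b)
      split_ifs <;> omega
    have hwE : ∀ m, E (w m) r := by
      intro m
      induction m with
      | zero =>
        have : w 0 = r := by funext j; simp [w]
        rw [this]; exact hr r hr'
      | succ m ih =>
        refine ht _ _ _ ?_ ih
        by_cases hm : ∃ i : Fin n, (i : ℕ) = m ∧ D i
        · obtain ⟨i, hi, hDi⟩ := hm
          refine hDi _ _ (hw _) (hw _) ?_
          intro j hj
          have : (j : ℕ) ≠ m := fun h => hj (Fin.ext (h.trans hi.symm))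
          show (if (j : ℕ) < m + 1 then p j else r j) = (if (j : ℕ) < m then p j else r j)
          split_ifs <;> first | rfl | omega
        · have : w (m + 1) = w m := by
            funext j
            show (if (j : ℕ) < m + 1 then p j else r j) = (if (j : ℕ) < m then p j else r j)
            split_ifs
            · rfl
            · refine hag j fun hDj => hm ⟨j, by omega, hDj⟩
            · omega
            · rfl
          rw [this]; exact hr _ (hw m)
    have : w n = p := by funext j; simp [w]
    rw [← this]; exact hwE n
  refine ⟨{i | ¬ D i}, fun p q hp hq => ⟨fun hE i hi => lemB i i rfl hi p q hp hq hE, ?_⟩⟩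
  intro hag
  have hm : StrictMono (fun i => max (p i) (q i)) := fun a b hab =>
    max_lt_max (hp hab) (hq hab)
  refine ht _ _ _ (raise p _ hp hm (fun i => le_max_left _ _) ?_)
    (hs _ _ (raise q _ hq hm (fun i => le_max_right _ _) ?_))
  · intro i hi
    have := hag i hi
    simp [this]
  · intro i hi
    have := hag i hi
    simp [this]

end RamseyAux

/-- Canonical Ramsey Theorem: for every `n ≥ 1` and every partition `P` of
`[ω]^n`, there is an infinite `Y ⊆ ℕ` canonical for `P`. -/
theorem stmt_1 (n : ℕ) (hn : 1 ≤ n) (P : Set (Set (Finset ℕ)))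
    (hP : IsPartitionOn (cube n) P) :
    ∃ Y : Set ℕ, Y.Infinite ∧ Canon n P Y := by
  classical
  obtain ⟨h, hh, hinv⟩ := ramsey_inv n
    (fun p q => EquivP P (Finset.univ.image p) (Finset.univ.image q))
  obtain ⟨I, hI⟩ := canon_inv n
    (fun p q => EquivP P (Finset.univ.image (h ∘ p)) (Finset.univ.image (h ∘ q)))
    (by
      intro p hp
      have hc : Finset.univ.image (h ∘ p) ∈ cube n := by
        show (Finset.univ.image (h ∘ p)).card = n
        rw [Finset.card_image_of_injective _ (hh.comp hp).injective]; simp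
      rw [← hP.1] at hc
      obtain ⟨A, hA, hpA⟩ := hc
      exact ⟨A, hA, hpA, hpA⟩)
    (by
      rintro p q ⟨A, hA, h1, h2⟩
      exact ⟨A, hA, h2, h1⟩)
    (by
      rintro p q r ⟨A, hA, h1, h2⟩ ⟨B, hB, h3, h4⟩
      rcases hP.2 A hA B hB with h5 | rfl
      · exact absurd (show _ ∈ A ∩ B from ⟨h2, h3⟩) (by rw [h5]; simp)
      · exact ⟨A, hA, h1, h4⟩)
    hinv
  refine ⟨Set.range h, Set.infinite_range_of_injective hh.injective,
    {i | ∃ hi : i < n, (⟨i, hi⟩ : Fin n) ∈ I}, fun i hi => hi.1, ?_⟩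
  have rep : ∀ p : Finset ℕ, ↑p ⊆ Set.range h → p.card = n →
      ∃ z : Fin n → ℕ, StrictMono z ∧ p = Finset.univ.image (h ∘ z) := by
    intro p hp hc
    obtain ⟨z, hz, rfl⟩ := exists_tuple p hc
    have : ∀ i, ∃ a, h a = z i := fun i => hp (by simp)
    choose w hw using this
    obtain rfl : h ∘ w = z := funext hw
    exact ⟨w, fun a b hab => hh.lt_iff_lt.1 (hz hab), rfl⟩
  intro p q hp hpc hq hqc
  obtain ⟨z, hz, rfl⟩ := rep p hp hpc
  obtain ⟨w, hw, rfl⟩ := rep q hq hqc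
  rw [hI z w hz hw]
  constructor
  · rintro hag i ⟨hi, hiI⟩
    have h1 := nth_image _ (hh.comp hz) ⟨i, hi⟩
    have h2 := nth_image _ (hh.comp hw) ⟨i, hi⟩
    simp only at h1 h2
    rw [h1, h2]
    simp [hag _ hiI]
  · intro hag i hi
    have := hag i ⟨i.2, hi⟩
    rw [nth_image _ (hh.comp hz), nth_image _ (hh.comp hw)] at this
    exact hh.injective this
end

section
/- Let n ≥ 2, let m = n^{n·B·(B−1)} where B = binomial(2n,n), let P be a partition of [ω]^n, let Q ∈ P*, and let X ⊆ ℕ be an infinite set with [X]^{2n} ⊆ Q. Then for all x, y ∈ [X⁻]^n with min(d(x), d(y)) ≥ m: x ≈_P y if and only if x_[i] = y_[i] for all i ∈ I(Q). -/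
namespace ER

lemma nth_image_range (h : ℕ → ℕ) (m : ℕ) (hh : StrictMonoOn h (Set.Iio m)) (i : ℕ) (hi : i < m) :
    nth ((Finset.range m).image h) i = h i := by
  have key : ((Finset.range m).image h).sort (· ≤ ·) = (List.range m).map h := by
    have hp : ((List.range m).map h).Pairwise (· < ·) := by
      rw [List.pairwise_map]
      have := List.pairwise_lt_range (n := m)
      refine List.Pairwise.imp_of_mem ?_ this
      intro a b ha hb hab
      exact hh (by simpa using ha) (by simpa using hb) hab
    have hs := Finset.sortedLT_sort ((Finset.range m).image h)
    refine List.Perm.eq_of_pairwise (le := (· < ·)) ?_ hs.pairwise hp ?_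
    · intro a b _ _ h1 h2; omega
    · rw [List.perm_ext_iff_of_nodup (Finset.sort_nodup _ _) (hp.imp (fun h => ne_of_lt h))]
      intro a; simp
  unfold nth
  rw [key]
  simp [List.getD, hi]

lemma exists_enum (s : Finset ℕ) : ∃ h : ℕ → ℕ, StrictMonoOn h (Set.Iio s.card) ∧
    (Finset.range s.card).image h = s := by
  refine ⟨fun i => if hi : i < s.card then s.orderEmbOfFin rfl ⟨i, hi⟩ else 0, ?_, ?_⟩
  · intro a ha b hb hab
    simp only [Set.mem_Iio] at ha hb
    simp [ha, hb, hab]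
  · ext v
    have := Finset.range_orderEmbOfFin s (rfl : s.card = s.card)
    constructor
    · intro hv
      simp only [Finset.mem_image, Finset.mem_range] at hv
      obtain ⟨i, hi, rfl⟩ := hv
      simp [hi]
    · intro hv
      have hv' : v ∈ Set.range (s.orderEmbOfFin rfl) := by rw [this]; exact hv
      obtain ⟨i, rfl⟩ := hv'
      simp only [Finset.mem_image, Finset.mem_range]
      exact ⟨i, i.2, by simp⟩

lemma nth_smo (s : Finset ℕ) : StrictMonoOn (nth s) (Set.Iio s.card) := by
  obtain ⟨h, h1, h2⟩ := exists_enum s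
  have : ∀ i < s.card, nth s i = h i := by
    intro i hi
    have := nth_image_range h s.card h1 i hi
    rwa [h2] at this
  intro a ha b hb hab
  rw [this a ha, this b hb]
  exact h1 ha hb hab

lemma image_nth (s : Finset ℕ) : (Finset.range s.card).image (nth s) = s := by
  obtain ⟨h, h1, h2⟩ := exists_enum s
  have : ∀ i < s.card, nth s i = h i := by
    intro i hi
    have := nth_image_range h s.card h1 i hi
    rwa [h2] at this
  conv_rhs => rw [← h2]
  apply Finset.image_congr
  intro i hi
  exact this i (by simpa using hi)

lemma nth_mem (s : Finset ℕ) (i : ℕ) (hi : i < s.card) : nth s i ∈ s := by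
  have h := Finset.mem_image_of_mem (nth s) (Finset.mem_range.2 hi)
  rwa [image_nth] at h

lemma nth_image (f : ℕ → ℕ) (s : Finset ℕ) (hf : StrictMonoOn f s) (i : ℕ) (hi : i < s.card) :
    nth (s.image f) i = f (nth s i) := by
  conv_lhs => rw [← image_nth s, Finset.image_image]
  rw [nth_image_range _ _ _ _ hi]
  · rfl
  · intro a ha b hb hab
    exact hf (nth_mem s a ha) (nth_mem s b hb) (nth_smo s ha hb hab)

lemma equiv_symm {P : Set (Set (Finset ℕ))} {a b : Finset ℕ} (h : EquivP P a b) : EquivP P b a := by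
  obtain ⟨A, hA, h1, h2⟩ := h
  exact ⟨A, hA, h2, h1⟩

lemma equiv_trans {n : ℕ} {P : Set (Set (Finset ℕ))} (hP : IsPartitionOn (cube n) P)
    {a b c : Finset ℕ} (h : EquivP P a b) (h' : EquivP P b c) : EquivP P a c := by
  obtain ⟨A, hA, h1, h2⟩ := h
  obtain ⟨B, hB, h3, h4⟩ := h'
  rcases hP.2 A hA B hB with h | h
  · exact absurd (show b ∈ A ∩ B from ⟨h2, h3⟩) (by rw [h]; simp)
  · subst h; exact ⟨A, hA, h1, h4⟩

lemma equiv_refl {n : ℕ} {P : Set (Set (Finset ℕ))} (hP : IsPartitionOn (cube n) P)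
    {a : Finset ℕ} (h : a.card = n) : EquivP P a a := by
  have : a ∈ ⋃₀ P := by rw [hP.1]; exact h
  obtain ⟨A, hA, h1⟩ := this
  exact ⟨A, hA, h1, h1⟩

lemma atom_sub {n : ℕ} {P : Set (Set (Finset ℕ))} {Q : Set (Finset ℕ)} (hQ : Q ∈ Atoms n P)
    {z : Finset ℕ} (hz : z ∈ Q) {p q : Finset ℕ} (hp : p ∈ idx n) (hq : q ∈ idx n)
    (hzq : z ∈ Qpq n P p q) : Q ⊆ Qpq n P p q := by
  obtain ⟨_, S, hS, rfl⟩ := hQ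
  have hsub : (⋂ p ∈ idx n, ⋂ q ∈ idx n, S p q) ⊆ S p q := by
    intro w hw
    simp only [Set.mem_iInter] at hw
    exact hw p hp q hq
  rcases hS p hp q hq with h | h
  · rw [← h]; exact hsub
  · have := hsub hz
    rw [h] at this
    exact absurd hzq this.2

/-- The initial-type data of a pair of `n`-sets: they sit inside a `2n`-set together with the
image under an order isomorphism. -/
lemma exists_type (n : ℕ) (A B : Finset ℕ) (hA : A.card = n) (hB : B.card = n) (f : ℕ → ℕ)
    (hf : StrictMonoOn f ↑(A ∪ B)) : ∃ h h' : ℕ → ℕ, ∃ p ∈ idx n, ∃ q ∈ idx n,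
      StrictMono h ∧ StrictMono h' ∧ p.image h = A ∧ q.image h = B ∧
      p.image h' = A.image f ∧ q.image h' = B.image f := by
  classical
  set u := A ∪ B with hu
  have huc : u.card ≤ 2 * n := by
    have := Finset.card_union_le A B
    rw [← hu] at this; omega
  set M := u.sup id + 1 with hM
  set C := u.sup f + 1 with hC
  have hMu : ∀ v ∈ u, v < M := fun v hv => Nat.lt_succ_of_le (Finset.le_sup (f := id) hv)
  have hCu : ∀ v ∈ u, f v < C := fun v hv => Nat.lt_succ_of_le (Finset.le_sup (f := f) hv)
  let S : ℕ → Prop := fun v => v ∈ u ∨ M ≤ v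
  have hSinf : (setOf S).Infinite := by
    apply (Set.Ici_infinite M).mono
    intro v hv; exact Or.inr hv
  let F : ℕ → ℕ := fun v => if v < M then f v else v + C
  have hFS : StrictMonoOn F (setOf S) := by
    intro a ha b hb hab
    simp only [F]
    split_ifs with h1 h2
    · exact hf (ha.resolve_right (by omega)) (hb.resolve_right (by omega)) hab
    · have := hCu a (ha.resolve_right (by omega)); omega
    · omega
    · omega
  let h := Nat.nth S
  have hh : StrictMono h := Nat.nth_strictMono hSinf
  have hmem : ∀ i, S (h i) := fun i => Nat.nth_mem_of_infinite hSinf i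
  have hh' : StrictMono (F ∘ h) := fun a b hab => hFS (hmem a) (hmem b) (hh hab)
  have hbound : ∀ i, h i ∈ u → i < 2 * n := by
    intro i hi
    have hsub : (Finset.range (i+1)).image h ⊆ u := by
      intro v hv
      simp only [Finset.mem_image, Finset.mem_range] at hv
      obtain ⟨j, hj, rfl⟩ := hv
      have h1 : h j ≤ h i := hh.monotone (by omega)
      have h2 := hMu _ hi
      exact (hmem j).resolve_right (by omega)
    have := Finset.card_le_card hsub
    rw [Finset.card_image_of_injective _ hh.injective, Finset.card_range] at this
    omega
  have him : ∀ D ⊆ u, ((Finset.range (2*n)).filter (fun i => h i ∈ D)).image h = D := by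
    intro D hD
    ext v
    simp only [Finset.mem_image, Finset.mem_filter, Finset.mem_range]
    constructor
    · rintro ⟨i, ⟨_, h2⟩, rfl⟩; exact h2
    · intro hv
      have hi : h (Nat.count S v) = v := Nat.nth_count (p := S) (Or.inl (hD hv))
      exact ⟨_, ⟨hbound _ (by rw [hi]; exact hD hv), by rw [hi]; exact hv⟩, hi⟩
  have hidx : ∀ D ⊆ u, D.card = n → (Finset.range (2*n)).filter (fun i => h i ∈ D) ∈ idx n := by
    intro D hD hc
    rw [idx, Finset.mem_powersetCard]
    refine ⟨Finset.filter_subset _ _, ?_⟩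
    rw [← Finset.card_image_of_injective _ hh.injective, him D hD, hc]
  have hFim : ∀ D ⊆ u, D.image F = D.image f := by
    intro D hD
    apply Finset.image_congr
    intro v hv
    simp only [F]
    rw [if_pos (hMu v (hD hv))]
  have hAu : A ⊆ u := Finset.subset_union_left
  have hBu : B ⊆ u := Finset.subset_union_right
  refine ⟨h, F ∘ h, _, hidx A hAu hA, _, hidx B hBu hB, hh, hh', him A hAu, him B hBu, ?_, ?_⟩
  · rw [← Finset.image_image, him A hAu, hFim A hAu]
  · rw [← Finset.image_image, him B hBu, hFim B hBu]

lemma mem_Qpq {n : ℕ} {P : Set (Set (Finset ℕ))} {p q : Finset ℕ} (hp : p ∈ idx n) (hq : q ∈ idx n)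
    {h : ℕ → ℕ} (hh : StrictMono h) :
    (Finset.range (2*n)).image h ∈ Qpq n P p q ↔ EquivP P (p.image h) (q.image h) := by
  have him : ∀ r ∈ idx n, r.image (nth ((Finset.range (2*n)).image h)) = r.image h := by
    intro r hr
    rw [idx, Finset.mem_powersetCard] at hr
    apply Finset.image_congr
    intro i hi
    exact nth_image_range h _ (hh.strictMonoOn _) i (by simpa using hr.1 hi)
  simp only [Qpq, Set.mem_setOf_eq, him p hp, him q hq]
  rw [Finset.card_image_of_injective _ hh.injective, Finset.card_range]
  simp

section main
variable {n : ℕ} {P : Set (Set (Finset ℕ))} {Q : Set (Finset ℕ)} {X : Set ℕ} {g : ℕ → ℕ}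

lemma z_mem (hXQ : ∀ z : Finset ℕ, ↑z ⊆ X → z.card = 2 * n → z ∈ Q)
    (hgX : ∀ i, g i ∈ X) (hg : StrictMono g) (h : ℕ → ℕ) (hh : StrictMono h) :
    (Finset.range (2*n)).image (g ∘ h) ∈ Q := by
  apply hXQ
  · intro v hv
    simp only [Finset.coe_image, Set.mem_image] at hv
    obtain ⟨i, _, rfl⟩ := hv
    exact hgX _
  · rw [Finset.card_image_of_injective _ (hg.comp hh).injective, Finset.card_range]

def R (P : Set (Set (Finset ℕ))) (g : ℕ → ℕ) (A B : Finset ℕ) : Prop :=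
  EquivP P (A.image g) (B.image g)

/-- Order invariance. -/
def Inv (n : ℕ) (P : Set (Set (Finset ℕ))) (g : ℕ → ℕ) : Prop :=
  ∀ A B : Finset ℕ, A.card = n → B.card = n → ∀ f : ℕ → ℕ, StrictMonoOn f ↑(A ∪ B) →
    R P g A B → R P g (A.image f) (B.image f)

lemma inv_of (hQ : Q ∈ Atoms n P) (hXQ : ∀ z : Finset ℕ, ↑z ⊆ X → z.card = 2 * n → z ∈ Q)
    (hgX : ∀ i, g i ∈ X) (hg : StrictMono g) : Inv n P g := by
  intro A B hA hB f hf hR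
  obtain ⟨h, h', p, hp, q, hq, hh, hh', rfl, rfl, e3, e4⟩ := exists_type n A B hA hB f hf
  have h1 := (mem_Qpq (P := P) hp hq (hg.comp hh)).2
    (by simpa [R, Finset.image_image] using hR)
  have h2 := atom_sub hQ (z_mem hXQ hgX hg h hh) hp hq h1
  have h3 := (mem_Qpq (P := P) hp hq (hg.comp hh')).1 (h2 (z_mem hXQ hgX hg h' hh'))
  rw [R, ← e3, ← e4]
  simpa [Finset.image_image] using h3

def E (n : ℕ) (α : ℕ → ℕ) : Finset ℕ := (Finset.range n).image α

lemma E_card {α : ℕ → ℕ} (h : StrictMonoOn α (Set.Iio n)) : (E n α).card = n := by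
  rw [E, Finset.card_image_of_injOn, Finset.card_range]
  rw [Finset.coe_range]; exact h.injOn

lemma E_congr {α β : ℕ → ℕ} (h : ∀ i < n, α i = β i) : E n α = E n β := by
  apply Finset.image_congr
  intro i hi
  exact h i (by simpa using hi)

lemma mem_E {α : ℕ → ℕ} {v : ℕ} : v ∈ E n α ↔ ∃ i < n, α i = v := by
  simp [E]

lemma E_image {α f : ℕ → ℕ} : (E n α).image f = E n (f ∘ α) := by
  rw [E, E, Finset.image_image]

def Free (n : ℕ) (P : Set (Set (Finset ℕ))) (g : ℕ → ℕ) (i : ℕ) : Prop :=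
  ∀ α β : ℕ → ℕ, StrictMonoOn α (Set.Iio n) → StrictMonoOn β (Set.Iio n) →
    (∀ j < n, j ≠ i → α j = β j) → R P g (E n α) (E n β)

lemma R_refl (hP : IsPartitionOn (cube n) P) (hg : StrictMono g) {A : Finset ℕ}
    (h : A.card = n) : R P g A A :=
  equiv_refl hP (by rw [Finset.card_image_of_injective _ hg.injective, h])

lemma free_of (hP : IsPartitionOn (cube n) P) (hg : StrictMono g) (hI : Inv n P g) {i : ℕ}
    (hi : i < n) {α α' : ℕ → ℕ} (hα : StrictMonoOn α (Set.Iio n))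
    (hα' : StrictMonoOn α' (Set.Iio n)) (hag : ∀ j < n, j ≠ i → α j = α' j)
    (hlt : α i < α' i) (hR : R P g (E n α) (E n α')) : Free n P g i := by
  classical
  have key : ∀ γ γ' : ℕ → ℕ, StrictMonoOn γ (Set.Iio n) → StrictMonoOn γ' (Set.Iio n) →
    (∀ j < n, j ≠ i → γ j = γ' j) → γ i < γ' i → R P g (E n γ) (E n γ') := by
    intro γ γ' hγ hγ' hag' hlt'
    let f : ℕ → ℕ := fun v => if v = α' i then γ' i else γ (Function.invFunOn α (Set.Iio n) v)
    have hne : ∀ j < n, α j ≠ α' i := by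
      intro j hj h
      by_cases hji : j = i
      · subst hji; omega
      · rw [hag j hj hji] at h
        exact hji (hα'.injOn hj hi h)
    have f1 : ∀ j < n, f (α j) = γ j := by
      intro j hj
      simp only [f]
      rw [if_neg (hne j hj)]
      rw [hα.injOn.leftInvOn_invFunOn hj]
    have f2 : f (α' i) = γ' i := by simp [f]
    have f3 : ∀ j < n, f (α' j) = γ' j := by
      intro j hj
      by_cases hji : j = i
      · rw [hji, f2]
      · rw [← hag j hj hji, f1 j hj, hag' j hj hji]
    have hm : StrictMonoOn f ↑(E n α ∪ E n α') := by
      have hel : ∀ v ∈ (↑(E n α ∪ E n α') : Set ℕ), (∃ j < n, v = α j) ∨ v = α' i := by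
        intro v hv
        simp only [Finset.coe_union, Set.mem_union, Finset.mem_coe, mem_E] at hv
        rcases hv with ⟨j, hj, rfl⟩ | ⟨j, hj, rfl⟩
        · exact Or.inl ⟨j, hj, rfl⟩
        · by_cases hji : j = i
          · rw [hji]; exact Or.inr rfl
          · exact Or.inl ⟨j, hj, (hag j hj hji).symm⟩
      intro a ha b hb hab
      rcases hel a ha with ⟨j, hj, rfl⟩ | rfl <;> rcases hel b hb with ⟨k, hk, rfl⟩ | rfl
      · rw [f1 j hj, f1 k hk]
        exact hγ hj hk ((hα.lt_iff_lt hj hk).1 hab)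
      · rw [f1 j hj, f2]
        by_cases hji : j = i
        · rw [hji]; exact hlt'
        · rw [hag' j hj hji]
          rw [hag j hj hji] at hab
          exact hγ' hj hi ((hα'.lt_iff_lt hj hi).1 hab)
      · rw [f1 k hk, f2]
        by_cases hji : k = i
        · subst hji; omega
        · rw [hag' k hk hji]
          rw [hag k hk hji] at hab
          exact hγ' hi hk ((hα'.lt_iff_lt hi hk).1 hab)
      · omega
    have := hI _ _ (E_card hα) (E_card hα') f hm hR
    rw [E_image, E_image] at this
    rwa [E_congr (α := f ∘ α) (β := γ) f1, E_congr (α := f ∘ α') (β := γ') f3] at this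
  intro γ γ' hγ hγ' hag'
  rcases lt_trichotomy (γ i) (γ' i) with h | h | h
  · exact key γ γ' hγ hγ' hag' h
  · rw [E_congr (α := γ) (β := γ')]
    · exact R_refl hP hg (E_card hγ')
    · intro j hj
      by_cases hji : j = i
      · rw [hji, h]
      · exact hag' j hj hji
  · exact equiv_symm (key γ' γ hγ' hγ (fun j hj hji => (hag' j hj hji).symm) h)

lemma free_step (hP : IsPartitionOn (cube n) P) (hg : StrictMono g) (hI : Inv n P g) {i : ℕ}
    (hi : i < n) {α β : ℕ → ℕ} (hα : StrictMonoOn α (Set.Iio n))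
    (hβ : StrictMonoOn β (Set.Iio n)) (hae : ∀ j < n, Even (α j)) (hbe : ∀ j < n, Even (β j))
    (hR : R P g (E n α) (E n β)) (hl : ∀ l < n, β l = α i → Free n P g l) : Free n P g i := by
  classical
  let f : ℕ → ℕ := fun v => if v = α i then v + 1 else v
  have hfe : ∀ a b, Even a → Even b → a < b → f a < f b := by
    intro a b ha hb hab
    obtain ⟨a', rfl⟩ := ha
    obtain ⟨b', rfl⟩ := hb
    simp only [f]
    split_ifs <;> omega
  have hm : StrictMonoOn f ↑(E n α ∪ E n β) := by
    have hel : ∀ v ∈ (↑(E n α ∪ E n β) : Set ℕ), Even v := by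
      intro v hv
      simp only [Finset.coe_union, Set.mem_union, Finset.mem_coe, mem_E] at hv
      rcases hv with ⟨j, hj, rfl⟩ | ⟨j, hj, rfl⟩
      · exact hae j hj
      · exact hbe j hj
    intro a ha b hb hab
    exact hfe a b (hel a ha) (hel b hb) hab
  have hR' := hI _ _ (E_card hα) (E_card hβ) f hm hR
  rw [E_image, E_image] at hR'
  have hfα : StrictMonoOn (f ∘ α) (Set.Iio n) := fun a ha b hb hab =>
    hfe _ _ (hae a ha) (hae b hb) (hα ha hb hab)
  have hfβ : StrictMonoOn (f ∘ β) (Set.Iio n) := fun a ha b hb hab =>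
    hfe _ _ (hbe a ha) (hbe b hb) (hβ ha hb hab)
  have hβR : R P g (E n β) (E n (f ∘ β)) := by
    by_cases hex : ∃ l < n, β l = α i
    · obtain ⟨l, hln, hlα⟩ := hex
      refine hl l hln hlα _ _ hβ hfβ ?_
      intro j hj hjl
      have : β j ≠ α i := by
        intro h
        exact hjl (hβ.injOn hj hln (h.trans hlα.symm))
      simp [f, this]
    · push Not at hex
      rw [E_congr (α := f ∘ β) (β := β)]
      · exact R_refl hP hg (E_card hβ)
      · intro j hj; simp [f, hex j hj]
  refine free_of hP hg hI hi hα hfα ?_ ?_ (equiv_trans hP hR (equiv_trans hP hβR (equiv_symm hR')))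
  · intro j hj hji
    have : α j ≠ α i := fun h => hji (hα.injOn hj hi h)
    simp [f, this]
  · simp [f]

lemma agree_of_not_free (hP : IsPartitionOn (cube n) P) (hg : StrictMono g) (hI : Inv n P g)
    {α β : ℕ → ℕ} (hα : StrictMonoOn α (Set.Iio n))
    (hβ : StrictMonoOn β (Set.Iio n)) (hae : ∀ j < n, Even (α j)) (hbe : ∀ j < n, Even (β j))
    (hR : R P g (E n α) (E n β)) (i : ℕ) : i < n → ¬ Free n P g i → α i = β i := by
  induction i using Nat.strong_induction_on with
  | _ i ih =>
    intro hi hF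
    have h1 : ∃ l < n, β l = α i ∧ ¬ Free n P g l := by
      by_contra hcon
      push Not at hcon
      exact hF (free_step hP hg hI hi hα hβ hae hbe hR hcon)
    have h2 : ∃ l < n, α l = β i ∧ ¬ Free n P g l := by
      by_contra hcon
      push Not at hcon
      exact hF (free_step hP hg hI hi hβ hα hbe hae (equiv_symm hR) hcon)
    obtain ⟨j, hj, hjα, hjF⟩ := h1
    obtain ⟨k, hk, hkβ, hkF⟩ := h2
    have hji : i ≤ j := by
      by_contra hlt
      push Not at hlt
      have h3 := ih j hlt hj hjF
      have := hα hj hi hlt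
      omega
    have hki : i ≤ k := by
      by_contra hlt
      push Not at hlt
      have h3 := ih k hlt hk hkF
      have := hβ hk hi hlt
      omega
    have h4 := hβ.monotoneOn hi hj hji
    have h5 := hα.monotoneOn hi hk hki
    omega

lemma chain (hP : IsPartitionOn (cube n) P) (hg : StrictMono g)
    {α β : ℕ → ℕ} (hα : StrictMonoOn α (Set.Iio n))
    (hβ : StrictMonoOn β (Set.Iio n)) (hle : ∀ i < n, α i ≤ β i)
    (hF : ∀ i < n, α i = β i ∨ Free n P g i) : R P g (E n α) (E n β) := by
  let c : ℕ → ℕ → ℕ := fun k j => if j < k then α j else β j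
  have hc : ∀ k, StrictMonoOn (c k) (Set.Iio n) := by
    intro k a ha b hb hab
    have h1 := hα ha hb hab
    have h2 := hβ ha hb hab
    have h3 := hle b hb
    simp only [c]
    split_ifs <;> omega
  have key : ∀ k ≤ n, R P g (E n (c k)) (E n β) := by
    intro k
    induction k with
    | zero =>
      intro _
      rw [E_congr (α := c 0) (β := β) (by intro i _; simp [c])]
      exact R_refl hP hg (E_card hβ)
    | succ k ih =>
      intro hk
      refine equiv_trans hP ?_ (ih (by omega))
      rcases hF k (by omega) with h | h
      · have := R_refl hP hg (E_card (hc k))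
        have he : E n (c (k+1)) = E n (c k) := by
          apply E_congr
          intro i hi
          simp only [c]
          by_cases hik : i = k
          · subst hik; simp [h]
          · split_ifs <;> first | rfl | omega
        show R P g (E n (c (k+1))) (E n (c k))
        rw [he]; exact this
      · refine h _ _ (hc _) (hc _) ?_
        intro i hi hik
        simp only [c]
        split_ifs <;> first | rfl | omega
  have := key n le_rfl
  rwa [E_congr (α := c n) (β := α)] at this
  intro i hi; simp [c, hi]

end main

end ER

theorem stmt_3 (n : ℕ) (hn : 2 ≤ n) (m : ℕ)
    (hm : m = n ^ (n * Nat.choose (2 * n) n * (Nat.choose (2 * n) n - 1)))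
    (P : Set (Set (Finset ℕ))) (hP : IsPartitionOn (cube n) P)
    (Q : Set (Finset ℕ)) (hQ : Q ∈ Atoms n P)
    (X : Set ℕ) (hX : X.Infinite)
    (hXQ : ∀ z : Finset ℕ, ↑z ⊆ X → z.card = 2 * n → z ∈ Q)
    (e : ℕ) (he : e = sInf X)
    (x y : Finset ℕ) (hx : ↑x ⊆ X \ {e}) (hxc : x.card = n)
    (hy : ↑y ⊆ X \ {e}) (hyc : y.card = n)
    (hdx : (m : ℕ∞) ≤ sparsity X e x) (hdy : (m : ℕ∞) ≤ sparsity X e y) :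
    EquivP P x y ↔ ∀ i ∈ IofQ n P Q, nth x i = nth y i := by
  classical
  set g : ℕ → ℕ := Nat.nth (· ∈ X) with hgdef
  have hg : StrictMono g := Nat.nth_strictMono hX
  have hgX : ∀ i, g i ∈ X := fun i => Nat.nth_mem_of_infinite hX i
  have hI : ER.Inv n P g := ER.inv_of hQ hXQ hgX hg
  have hpull : ∀ s : Finset ℕ, (↑s ⊆ X \ {e}) → ∃ a : Finset ℕ, a.image g = s := by
    intro s hs
    refine ⟨s.image (Nat.count (· ∈ X)), ?_⟩
    rw [Finset.image_image]
    conv_rhs => rw [← Finset.image_id (s := s)]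
    apply Finset.image_congr
    intro v hv
    exact Nat.nth_count (p := (· ∈ X)) (hs hv).1
  obtain ⟨a, rfl⟩ := hpull x hx
  obtain ⟨b, rfl⟩ := hpull y hy
  have hac : a.card = n := by rwa [Finset.card_image_of_injective _ hg.injective] at hxc
  have hbc : b.card = n := by rwa [Finset.card_image_of_injective _ hg.injective] at hyc
  have hna : ∀ i < n, nth (a.image g) i = g (nth a i) := fun i hi =>
    ER.nth_image g a (hg.strictMonoOn _) i (by omega)
  have hnb : ∀ i < n, nth (b.image g) i = g (nth b i) := fun i hi =>
    ER.nth_image g b (hg.strictMonoOn _) i (by omega)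
  constructor
  · intro hE i hi
    obtain ⟨h, h', p, hp, q, hq, hh, hh', rfl, rfl, e3, e4⟩ :=
      ER.exists_type n a b hac hbc id (strictMono_id.strictMonoOn _)
    have h1 := (ER.mem_Qpq (P := P) hp hq (hg.comp hh)).2
      (by simpa [Finset.image_image] using hE)
    have h2 := ER.atom_sub hQ (ER.z_mem hXQ hgX hg h hh) hp hq h1
    simp only [IofQ, Set.mem_iInter] at hi
    obtain ⟨h3, h4⟩ := hi p hp q hq h2
    have hpc := (Finset.mem_powersetCard.1 hp).2
    have hqc := (Finset.mem_powersetCard.1 hq).2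
    rw [hna i h3, hnb i h3, ER.nth_image h p (hh.strictMonoOn _) i (by omega),
      ER.nth_image h q (hh.strictMonoOn _) i (by omega), h4]
  · intro hag
    have hfree : ∀ i < n, nth a i = nth b i ∨ ER.Free n P g i := by
      intro i hi
      by_cases hF : ER.Free n P g i
      · exact Or.inr hF
      left
      have hiI : i ∈ IofQ n P Q := by
        simp only [IofQ, Set.mem_iInter]
        intro p hp q hq hpq
        refine ⟨hi, ?_⟩
        have hpc := (Finset.mem_powersetCard.1 hp).2
        have hqc := (Finset.mem_powersetCard.1 hq).2
        have hd : StrictMono (fun v : ℕ => 2 * v) := fun a b hab => by simpa using hab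
        have h1 := (ER.mem_Qpq (P := P) hp hq (hg.comp hd)).1 (hpq (ER.z_mem hXQ hgX hg _ hd))
        have hEr : ∀ r : Finset ℕ, r.card = n →
            r.image (fun v => 2 * v) = ER.E n (fun i => 2 * nth r i) := by
          intro r hr
          conv_lhs => rw [← ER.image_nth r, hr, Finset.image_image]
          rfl
        have hsm : ∀ r : Finset ℕ, r.card = n →
            StrictMonoOn (fun i => 2 * nth r i) (Set.Iio n) := by
          intro r hr a ha b hb hab
          have := ER.nth_smo r (hr ▸ ha) (hr ▸ hb) hab
          simpa using this
        have h2 : ER.R P g (ER.E n (fun i => 2 * nth p i)) (ER.E n (fun i => 2 * nth q i)) := by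
          rw [← hEr p hpc, ← hEr q hqc, ER.R, Finset.image_image, Finset.image_image]
          exact h1
        have := ER.agree_of_not_free hP hg hI (hsm p hpc) (hsm q hqc)
          (fun j _ => even_two_mul _) (fun j _ => even_two_mul _) h2 i hi hF
        simpa using this
      have := hag i hiI
      rw [hna i hi, hnb i hi] at this
      exact hg.injective this
    have hsa : StrictMonoOn (nth a) (Set.Iio n) := hac ▸ ER.nth_smo a
    have hsb : StrictMonoOn (nth b) (Set.Iio n) := hbc ▸ ER.nth_smo b
    have hEa : ER.E n (nth a) = a := by rw [ER.E, ← hac]; exact ER.image_nth a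
    have hEb : ER.E n (nth b) = b := by rw [ER.E, ← hbc]; exact ER.image_nth b
    let w : ℕ → ℕ := fun i => max (nth a i) (nth b i)
    have hw : StrictMonoOn w (Set.Iio n) := by
      intro i hi j hj hij
      exact max_lt_max (hsa hi hj hij) (hsb hi hj hij)
    have c1 : ER.R P g (ER.E n (nth a)) (ER.E n w) := ER.chain hP hg hsa hw
      (fun i _ => le_max_left _ _) (fun i hi => (hfree i hi).imp (fun h => by simp [w, h]) id)
    have c2 : ER.R P g (ER.E n (nth b)) (ER.E n w) := ER.chain hP hg hsb hw
      (fun i _ => le_max_right _ _) (fun i hi => (hfree i hi).imp (fun h => by simp [w, h]) id)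
    have := ER.equiv_trans hP c1 (ER.equiv_symm c2)
    rwa [hEa, hEb] at this
end

section
/- Let n ≥ 1, let P be a partition of [ω]^n, let Q ∈ P*, and let X ⊆ ℕ be an infinite set with [X]^{2n} ⊆ Q. Then for all x, y ∈ [X]^n: x ↔_Q y if and only if x ≈_P y. -/
theorem aux_nth_image (z : Finset ℕ) (m : ℕ) (hz : z.card = m) :
    (Finset.range m).image (nth z) = z := by
  ext a
  simp only [Finset.mem_image, Finset.mem_range, nth]
  have hl : (z.sort (· ≤ ·)).length = m := by rw [Finset.length_sort, hz]
  constructor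
  · rintro ⟨i, hi, rfl⟩
    rw [List.getD_eq_getElem _ _ (by omega)]
    exact (Finset.mem_sort (· ≤ ·)).1 (List.getElem_mem _)
  · intro ha
    obtain ⟨i, hi, h⟩ := List.mem_iff_getElem.1 ((Finset.mem_sort (· ≤ ·)).2 ha)
    exact ⟨i, by omega, by rw [List.getD_eq_getElem _ _ hi, h]⟩

theorem aux_index (z : Finset ℕ) (n : ℕ) (hz : z.card = 2 * n) (x : Finset ℕ) (hx : x ⊆ z)
    (hxc : x.card = n) : ∃ p ∈ idx n, p.image (nth z) = x := by
  have him := aux_nth_image z (2 * n) hz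
  have hinj : Set.InjOn (nth z) (Finset.range (2 * n)) := by
    apply Finset.card_image_iff.1
    rw [him, hz, Finset.card_range]
  have hi : ((Finset.range (2 * n)).filter (fun i => nth z i ∈ x)).image (nth z) = x := by
    ext a
    simp only [Finset.mem_image, Finset.mem_filter]
    constructor
    · rintro ⟨i, ⟨_, h⟩, rfl⟩
      exact h
    · intro ha
      have h := hx ha
      rw [← him] at h
      obtain ⟨i, h1, h2⟩ := Finset.mem_image.1 h
      exact ⟨i, ⟨h1, h2 ▸ ha⟩, h2⟩
  refine ⟨_, ?_, hi⟩
  rw [idx, Finset.mem_powersetCard]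
  refine ⟨Finset.filter_subset _ _, ?_⟩
  have hc := congrArg Finset.card hi
  rw [Finset.card_image_of_injOn, hxc] at hc
  · exact hc
  · intro a ha b hb hab
    exact hinj (Finset.mem_coe.2 (Finset.mem_filter.1 (Finset.mem_coe.1 ha)).1)
      (Finset.mem_coe.2 (Finset.mem_filter.1 (Finset.mem_coe.1 hb)).1) hab

/-- for `Q ∈ P*` and infinite `X` with `[X]^{2n} ⊆ Q`, the relations
`↔_Q` and `≈_P` coincide on `[X]^n`. -/
theorem stmt_4 (n : ℕ) (hn : 1 ≤ n) (P : Set (Set (Finset ℕ)))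
    (hP : IsPartitionOn (cube n) P) (Q : Set (Finset ℕ)) (hQ : Q ∈ Atoms n P)
    (X : Set ℕ) (hX : X.Infinite)
    (hXQ : ∀ z : Finset ℕ, ↑z ⊆ X → z.card = 2 * n → z ∈ Q)
    (x y : Finset ℕ) (hx : ↑x ⊆ X) (hxc : x.card = n) (hy : ↑y ⊆ X) (hyc : y.card = n) :
    RelQ n P Q X x y ↔ EquivP P x y := by
  constructor
  · rintro ⟨p, _, q, _, hpq, z, hzX, hzc, rfl, rfl⟩
    exact (hpq (hXQ z hzX hzc)).2
  · intro hxy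
    have hsub : ((x ∪ y : Finset ℕ) : Set ℕ) ⊆ X := by
      rw [Finset.coe_union]; exact Set.union_subset hx hy
    have hcard : (x ∪ y).card ≤ 2 * n := by
      have := Finset.card_union_le x y
      omega
    obtain ⟨z, hzX, hxyz, hzc⟩ : ∃ z : Finset ℕ, ↑z ⊆ X ∧ x ∪ y ⊆ z ∧ z.card = 2 * n := by
      obtain ⟨t, ht, htc⟩ := (hX.sdiff (x ∪ y).finite_toSet).exists_subset_card_eq
        (2 * n - (x ∪ y).card)
      refine ⟨(x ∪ y) ∪ t, ?_, Finset.subset_union_left, ?_⟩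
      · rw [Finset.coe_union]
        exact Set.union_subset hsub (ht.trans Set.sdiff_subset)
      · rw [Finset.card_union_of_disjoint, htc]
        · omega
        · rw [Finset.disjoint_left]
          intro a ha hat
          exact (ht hat).2 ha
    obtain ⟨p, hp, hpx⟩ := aux_index z n hzc x (Finset.subset_union_left.trans hxyz) hxc
    obtain ⟨q, hq, hqy⟩ := aux_index z n hzc y (Finset.subset_union_right.trans hxyz) hyc
    refine ⟨p, hp, q, hq, ?_, z, hzX, hzc, hpx, hqy⟩
    obtain ⟨_, S, hS, hQS⟩ := hQ
    have hQsub : Q ⊆ S p q := by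
      intro w hw
      rw [hQS] at hw
      simp only [Set.mem_iInter] at hw
      exact hw p hp q hq
    have hzQ : z ∈ Qpq n P p q := ⟨hzc, by rw [hpx, hqy]; exact hxy⟩
    rcases hS p hp q hq with h | h
    · rw [← h]; exact hQsub
    · have := hQsub (hXQ z hzX hzc)
      rw [h] at this
      exact absurd hzQ this.2
end

section
/- Let X ⊆ ℕ be infinite with e = min X. Then for all finite sets x, y, z ⊆ X⁻: r(x, z) ≤ r(x, y) + r(y, z) (the function r satisfies the triangle inequality). -/
/-- the function `r` satisfies the triangle inequality. -/
theorem stmt_6 (X : Set ℕ) (hX : X.Infinite) (e : ℕ) (he : e = sInf X)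
    (x y z : Finset ℕ) (hx : ↑x ⊆ X \ {e}) (hy : ↑y ⊆ X \ {e}) (hz : ↑z ⊆ X \ {e}) :
    rfun X e x z ≤ rfun X e x y + rfun X e y z := by
  have heb : ∀ b ∈ X, e ≤ b := fun b hb => he ▸ Nat.sInf_le hb
  have key : ∀ (u v : Finset ℕ), ∀ b ∈ v, b ∈ X →
      ∃ a ∈ (u ∪ {e} : Finset ℕ), a ≤ b ∧ rho X a b ≤ rfun X e u v := by
    intro u v b hb hbX
    have hne : ((fun a => rho X a b) '' {a : ℕ | a ∈ (u ∪ {e} : Finset ℕ) ∧ a ≤ b}).Nonempty :=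
      ⟨_, e, ⟨by simp, heb b hbX⟩, rfl⟩
    obtain ⟨a, ⟨ha, hab⟩, h⟩ := Nat.sInf_mem hne
    refine ⟨a, ha, hab, ?_⟩
    have h' : rho X a b = _ := h
    rw [h']
    exact Finset.le_sup
      (f := fun b => sInf ((fun a => rho X a b) '' {a : ℕ | a ∈ (u ∪ {e} : Finset ℕ) ∧ a ≤ b})) hb
  have tri : ∀ a c b : ℕ, a ≤ c → c ≤ b → rho X a b ≤ rho X a c + rho X c b := by
    intro a c b hac hcb
    unfold rho
    rw [min_eq_left hac, max_eq_right hac, min_eq_left hcb, max_eq_right hcb,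
      min_eq_left (hac.trans hcb), max_eq_right (hac.trans hcb),
      ← Set.Ico_union_Ico_eq_Ico hac hcb, Set.inter_union_distrib_left]
    exact Set.ncard_union_le _ _
  conv_lhs => unfold rfun
  refine Finset.sup_le fun b hb => ?_
  have hbX : b ∈ X := (hz hb).1
  obtain ⟨c, hc, hcb, hr⟩ := key y z b hb hbX
  have h1 : ∃ a ∈ (x ∪ {e} : Finset ℕ), a ≤ c ∧ rho X a c ≤ rfun X e x y := by
    rcases Finset.mem_union.1 hc with hc | hc
    · exact key x y c hc (hy hc).1
    · rw [Finset.mem_singleton] at hc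
      exact ⟨c, by simp [hc], le_rfl, by simp [rho]⟩
  obtain ⟨a, ha, hac, hr'⟩ := h1
  have h2 := tri a c b hac hcb
  refine le_trans (Nat.sInf_le ⟨a, ⟨ha, hac.trans hcb⟩, rfl⟩) ?_
  show rho X a b ≤ _
  omega
end

section
/- Let n ≥ 2 and let X ⊆ ℕ be infinite. For every natural number l ≥ 1, every set x ∈ [X⁻]^n with sparsity d(x) ≥ n^{2l}, and all p, q ∈ [2n]^n, there is a set y ∈ [X⁻]^n such that (1) d(y) ≥ n^{2l−2}, (2) r(x, y) ≤ n^{2l−1}, and (3) x →_{pq} y. -/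
lemma nth_image_range (f : ℕ → ℕ) (hf : StrictMono f) (N i : ℕ) (hi : i < N) :
    nth ((Finset.range N).image f) i = f i := by
  have h : ((Finset.range N).image f).sort (· ≤ ·) = (List.range N).map f := by
    apply List.Perm.eq_of_pairwise' (r := (· ≤ ·))
    · exact Finset.pairwise_sort _ _
    · rw [List.pairwise_map]
      exact (List.pairwise_lt_range).imp fun h => (hf h).le
    · rw [List.perm_ext_iff_of_nodup (Finset.sort_nodup _ _)
        (List.nodup_range.map hf.injective)]
      intro a; simp
  unfold nth
  rw [h]
  simp [hi]

lemma core (n D : ℕ) (hn : 2 ≤ n) (a : ℕ → ℕ) (ha0 : a 0 = 0)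
    (ha : ∀ k < n, a k + n ^ 2 * D ≤ a (k + 1)) (p : Finset ℕ) (hp : p ∈ idx n) :
    ∃ Z : ℕ → ℕ, Z 0 = 0 ∧ (∀ m, Z m + D ≤ Z (m + 1)) ∧
      (∀ m ∈ p, ∃ k < n, Z (m + 1) = a (k + 1)) ∧
      ∀ m ≤ 2 * n, ∃ k ≤ n, a k ≤ Z m ∧ Z m ≤ a k + n * D := by
  classical
  obtain ⟨hps, hpc⟩ := Finset.mem_powersetCard.1 hp
  let c : ℕ → ℕ := fun m => Nat.count (· ∈ p) m
  let u : ℕ → ℕ := fun m => Nat.count (· ∉ p) m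
  have hcs : ∀ m, m ∈ p → c (m + 1) = c m + 1 := fun m hm => by simp [c, Nat.count_succ, hm]
  have hcs' : ∀ m, m ∉ p → c (m + 1) = c m := fun m hm => by simp [c, Nat.count_succ, hm]
  have hus : ∀ m, m ∈ p → u (m + 1) = u m := fun m hm => by simp [u, Nat.count_succ, hm]
  have hus' : ∀ m, m ∉ p → u (m + 1) = u m + 1 := fun m hm => by simp [u, Nat.count_succ, hm]
  have hcn : ∀ m, c m ≤ n := by
    intro m
    simp only [c, Nat.count_eq_card_filter_range]
    rw [← hpc]
    apply Finset.card_le_card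
    intro t ht; exact (Finset.mem_filter.1 ht).2
  have hcl : ∀ m ∈ p, c m < n := by
    intro m hm
    have := hcn (m + 1); rw [hcs m hm] at this; omega
  have hun : ∀ m ≤ 2 * n, u m ≤ n := by
    intro m hm
    simp only [u, Nat.count_eq_card_filter_range]
    have h1 : (Finset.range (2 * n) \ p).card = n := by
      rw [Finset.card_sdiff_of_subset hps, hpc, Finset.card_range]; omega
    rw [← h1]
    apply Finset.card_le_card
    intro t ht
    simp only [Finset.mem_filter, Finset.mem_range, Finset.mem_sdiff] at ht ⊢
    exact ⟨by omega, ht.2⟩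
  let Z : ℕ → ℕ := fun m => Nat.rec 0 (fun m z => if m ∈ p then a (c m + 1) else z + D) m
  have Zs : ∀ m, m ∈ p → Z (m + 1) = a (c m + 1) := fun m hm => by simp [Z, hm]
  have Zs' : ∀ m, m ∉ p → Z (m + 1) = Z m + D := fun m hm => by simp [Z, hm]
  have Z0 : Z 0 = 0 := rfl
  have inv : ∀ m, a (c m) ≤ Z m ∧ Z m ≤ a (c m) + u m * D := by
    intro m
    induction m with
    | zero => simp [c, u, Z0, ha0]
    | succ m ih =>
      by_cases hm : m ∈ p
      · rw [Zs m hm, hcs m hm]; exact ⟨le_rfl, Nat.le_add_right _ _⟩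
      · rw [Zs' m hm, hcs' m hm, hus' m hm, Nat.add_mul]
        omega
  have hb : ∀ m ≤ 2 * n, Z m ≤ a (c m) + n * D := fun m hm =>
    (inv m).2.trans (Nat.add_le_add_left (Nat.mul_le_mul_right _ (hun m hm)) _)
  refine ⟨Z, Z0, ?_, fun m hm => ⟨c m, hcl m hm, Zs m hm⟩,
    fun m hm => ⟨c m, hcn m, (inv m).1, hb m hm⟩⟩
  intro m
  by_cases hm : m ∈ p
  · rw [Zs m hm]
    have h1 := hb m (Finset.mem_range.1 (hps hm)).le
    have h2 := ha (c m) (hcl m hm)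
    have h3 : n * D + D ≤ n ^ 2 * D := by
      have : (n + 1) * D ≤ n ^ 2 * D := Nat.mul_le_mul_right _ (by nlinarith)
      linarith
    omega
  · rw [Zs' m hm]

open Classical in
lemma count_add_rho (X : Set ℕ) (a b : ℕ) (h : a ≤ b) :
    Nat.count (· ∈ X) a + rho X a b = Nat.count (· ∈ X) b := by
  obtain ⟨k, rfl⟩ := Nat.exists_eq_add_of_le h
  unfold rho
  rw [min_eq_left h, max_eq_right h]
  have h2 : X ∩ Set.Ico a (a + k) = ↑((Finset.Ico a (a + k)).filter (· ∈ X)) := by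
    ext t; simp [and_comm]
  rw [h2, Set.ncard_coe_finset, Nat.count_eq_card_filter_range, Nat.count_eq_card_filter_range,
    Finset.range_eq_Ico, Finset.range_eq_Ico, ← Finset.card_union_of_disjoint,
    ← Finset.filter_union, Finset.Ico_union_Ico_eq_Ico (Nat.zero_le _) h]
  apply Finset.disjoint_filter_filter
  exact Finset.Ico_disjoint_Ico_consecutive _ _ _

/-- for `l ≥ 1`, `x ∈ [X⁻]^n` with `d(x) ≥ n^{2l}`, and `p, q ∈ [2n]^n`,
there is `y ∈ [X⁻]^n` with `d(y) ≥ n^{2l-2}`, `r(x,y) ≤ n^{2l-1}`, and `x →_{pq} y`. -/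
theorem stmt_7 (n : ℕ) (hn : 2 ≤ n) (X : Set ℕ) (hX : X.Infinite) (e : ℕ) (he : e = sInf X)
    (l : ℕ) (hl : 1 ≤ l)
    (x : Finset ℕ) (hx : ↑x ⊆ X \ {e}) (hxc : x.card = n)
    (hd : ((n ^ (2 * l) : ℕ) : ℕ∞) ≤ sparsity X e x)
    (p q : Finset ℕ) (hp : p ∈ idx n) (hq : q ∈ idx n) :
    ∃ y : Finset ℕ, ↑y ⊆ X \ {e} ∧ y.card = n ∧
      ((n ^ (2 * l - 2) : ℕ) : ℕ∞) ≤ sparsity X e y ∧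
      rfun X e x y ≤ n ^ (2 * l - 1) ∧
      Arrow X n p q x y := by
  classical
  obtain ⟨hps, hpc⟩ := Finset.mem_powersetCard.1 hp
  obtain ⟨hqs, hqc⟩ := Finset.mem_powersetCard.1 hq
  set D := n ^ (2 * l - 2) with hDdef
  have hD : 1 ≤ D := Nat.one_le_pow _ _ (by omega)
  have e1 : n ^ (2 * l - 1) = n * D := by
    rw [hDdef, ← pow_succ']; congr 1; omega
  have e2 : n ^ (2 * l) = n ^ 2 * D := by
    rw [hDdef, ← pow_add]; congr 1; omega
  have heX : e ∈ X := he ▸ Nat.sInf_mem hX.nonempty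
  have hemin : ∀ t ∈ X, e ≤ t := fun t ht => he ▸ Nat.sInf_le ht
  let E : ℕ → ℕ := Nat.nth (· ∈ X)
  have hX' : (Set.ofPred (· ∈ X)).Infinite := hX
  have hE : StrictMono E := Nat.nth_strictMono hX'
  have hEX : ∀ i, E i ∈ X := fun i => Nat.nth_mem_of_infinite hX' i
  have hE0 : E 0 = e := by
    rw [he]; exact Nat.nth_zero
  have hcE : ∀ i, Nat.count (· ∈ X) (E i) = i := fun i => Nat.count_nth_of_infinite hX' i
  have hEc : ∀ t ∈ X, E (Nat.count (· ∈ X) t) = t := fun t ht => Nat.nth_count ht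
  have hrho : ∀ i j, i ≤ j → i + rho X (E i) (E j) = j := by
    intro i j h
    have := count_add_rho X (E i) (E j) (hE.monotone h)
    rwa [hcE, hcE] at this
  have rho_comm : ∀ s t, rho X s t = rho X t s := fun s t => by
    unfold rho; rw [min_comm, max_comm]
  have hex : e ∉ x := fun h => (hx h).2 rfl
  have hxe : (x ∪ {e}).card = n + 1 := by
    rw [Finset.card_union_of_disjoint (by simpa using hex)]; simp [hxc]
  let g : ℕ → ℕ := fun k => if h : k < n + 1 then (x ∪ {e}).orderEmbOfFin hxe ⟨k, h⟩ else 0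
  have hgmem : ∀ k < n + 1, g k ∈ x ∪ {e} := by
    intro k hk
    simp only [g, dif_pos hk]
    exact Finset.orderEmbOfFin_mem _ _ _
  have hgX : ∀ k < n + 1, g k ∈ X := by
    intro k hk
    rcases Finset.mem_union.1 (hgmem k hk) with h | h
    · exact (hx h).1
    · rw [Finset.mem_singleton.1 h]; exact heX
  have hglt : ∀ i j, i < j → j < n + 1 → g i < g j := by
    intro i j hij hj
    simp only [g, dif_pos hj, dif_pos (hij.trans hj)]
    exact (Finset.orderEmbOfFin _ hxe).strictMono hij
  have hg0 : g 0 = e := by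
    have h1 : e ∈ Set.range ((x ∪ {e}).orderEmbOfFin hxe) := by
      rw [Finset.range_orderEmbOfFin]; simp
    obtain ⟨⟨j, hj⟩, hje⟩ := h1
    have hje' : g j = e := by simp only [g, dif_pos hj]; exact hje
    rcases Nat.eq_zero_or_pos j with h | h
    · subst h; exact hje'
    · have := hglt 0 j h hj
      have := hemin _ (hgX 0 (by omega))
      omega
  have hgx : ∀ k < n, g (k + 1) ∈ x := by
    intro k hk
    rcases Finset.mem_union.1 (hgmem (k + 1) (by omega)) with h | h
    · exact h
    · have := hglt 0 (k + 1) (by omega) (by omega)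
      rw [Finset.mem_singleton.1 h, hg0] at this
      omega
  let a : ℕ → ℕ := fun k => Nat.count (· ∈ X) (g k)
  have hEa : ∀ k < n + 1, E (a k) = g k := fun k hk => hEc _ (hgX k hk)
  have ha0 : a 0 = 0 := by
    simp only [a, hg0, ← hE0]; exact hcE 0
  have ha : ∀ k < n, a k + n ^ 2 * D ≤ a (k + 1) := by
    intro k hk
    have h1 := hglt k (k + 1) (by omega) (by omega)
    have h2 := count_add_rho X _ _ h1.le
    have h3 : ((n ^ (2 * l) : ℕ) : ℕ∞) ≤ (rho X (g k) (g (k + 1)) : ℕ∞) := by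
      refine hd.trans ?_
      unfold sparsity
      exact (iInf₂_le (g k) (hgmem k (by omega))).trans
        ((iInf₂_le (g (k + 1)) (hgmem (k + 1) (by omega))).trans (iInf_le _ h1.ne))
    have h4 : n ^ (2 * l) ≤ rho X (g k) (g (k + 1)) := by exact_mod_cast h3
    rw [e2] at h4
    change Nat.count (· ∈ X) (g k) + _ ≤ Nat.count (· ∈ X) (g (k + 1))
    omega
  obtain ⟨Z, Z0, Zstep, Zp, Zr⟩ := core n D hn a ha0 ha p hp
  have Zmono : StrictMono Z := strictMono_nat_of_lt_succ fun m => by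
    have := Zstep m; omega
  have Zgap : ∀ i j, i < j → Z i + D ≤ Z j := fun i j h =>
    (Zstep i).trans (Zmono.monotone h)
  let f : ℕ → ℕ := fun m => E (Z (m + 1))
  have hf : StrictMono f := fun i j h => hE (Zmono (by omega))
  let z := (Finset.range (2 * n)).image f
  have hnz : ∀ i < 2 * n, nth z i = f i := fun i hi => nth_image_range f hf _ i hi
  have hpz : p.image (nth z) = p.image f :=
    Finset.image_congr fun i hi => hnz i (Finset.mem_range.1 (hps hi))
  have hqz : q.image (nth z) = q.image f :=
    Finset.image_congr fun i hi => hnz i (Finset.mem_range.1 (hqs hi))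
  refine ⟨q.image f, ?_, ?_, ?_, ?_, z, ?_, ?_, ?_, hqz⟩
  · intro t ht
    obtain ⟨m, -, rfl⟩ := Finset.mem_image.1 (Finset.mem_coe.1 ht)
    refine ⟨hEX _, ?_⟩
    have h1 : E 0 < f m := hE (by rw [← Z0]; exact Zmono (by omega))
    rw [hE0] at h1
    exact h1.ne'
  · rw [Finset.card_image_of_injective _ hf.injective, hqc]
  · have hmem : ∀ t ∈ (q.image f ∪ {e} : Finset ℕ), ∃ m, t = E (Z m) := by
      intro t ht
      rcases Finset.mem_union.1 ht with h | h
      · obtain ⟨m, -, rfl⟩ := Finset.mem_image.1 h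
        exact ⟨m + 1, rfl⟩
      · exact ⟨0, by rw [Z0, hE0]; exact Finset.mem_singleton.1 h⟩
    have hlt : ∀ i j, i < j → D ≤ rho X (E (Z i)) (E (Z j)) := by
      intro i j h
      have h1 := Zgap i j h
      have h2 := hrho (Z i) (Z j) (by omega)
      omega
    unfold sparsity
    refine le_iInf₂ fun s hs => le_iInf₂ fun t ht => le_iInf fun hst => ?_
    obtain ⟨i, rfl⟩ := hmem s hs
    obtain ⟨j, rfl⟩ := hmem t ht
    have hij : i ≠ j := fun h => hst (by rw [h])
    rcases lt_or_gt_of_ne hij with h | h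
    · exact_mod_cast hlt i j h
    · rw [rho_comm]; exact_mod_cast hlt j i h
  · rw [e1]
    unfold rfun
    refine Finset.sup_le fun b hb => ?_
    obtain ⟨m, hm, rfl⟩ := Finset.mem_image.1 hb
    have hm2 := Finset.mem_range.1 (hqs hm)
    obtain ⟨k, hk, hk1, hk2⟩ := Zr (m + 1) (by omega)
    have h1 := hrho _ _ hk1
    rw [hEa k (by omega)] at h1
    have h2 : g k ≤ f m := by
      rw [← hEa k (by omega)]; exact hE.monotone hk1
    have h3 : rho X (g k) (f m) ≤ n * D := by
      change rho X (g k) (E (Z (m + 1))) ≤ _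
      omega
    refine le_trans (Nat.sInf_le ?_) h3
    exact ⟨g k, ⟨hgmem k (by omega), h2⟩, rfl⟩
  · intro t ht
    obtain ⟨m, -, rfl⟩ := Finset.mem_image.1 (Finset.mem_coe.1 ht)
    exact hEX _
  · rw [Finset.card_image_of_injective _ hf.injective, Finset.card_range]
  · rw [hpz]
    apply Finset.eq_of_subset_of_card_le
    · intro t ht
      obtain ⟨m, hm, rfl⟩ := Finset.mem_image.1 ht
      obtain ⟨k, hk, hZ⟩ := Zp m hm
      change E (Z (m + 1)) ∈ x
      rw [hZ, hEa (k + 1) (by omega)]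
      exact hgx k hk
    · rw [Finset.card_image_of_injective _ hf.injective, hpc, hxc]
end

section
/- Let n ≥ 1, let X ⊆ ℕ, let p, q ∈ [2n]^n, let x, y ∈ [X]^n with x →_{pq} y, and let i, j < n. Then x_[i] = y_[j] if and only if i ∈ dom φ_{pq} and φ_{pq}(i) = j. -/
lemma nth_eq_aux (s : Finset ℕ) (i : ℕ) (h : i < s.card) :
    nth s i = s.orderEmbOfFin rfl ⟨i, h⟩ := by
  unfold nth
  rw [Finset.orderEmbOfFin_apply, List.getD_eq_getElem _ _ (by simpa using h)]
  rfl

lemma nth_mem_aux (s : Finset ℕ) (i : ℕ) (h : i < s.card) : nth s i ∈ s := by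
  rw [nth_eq_aux s i h]
  exact Finset.orderEmbOfFin_mem _ _ _

lemma nth_lt_aux (s : Finset ℕ) (i j : ℕ) (hj : j < s.card) (hij : i < j) :
    nth s i < nth s j := by
  rw [nth_eq_aux s j hj, nth_eq_aux s i (hij.trans hj)]
  exact (s.orderEmbOfFin rfl).strictMono hij

lemma nth_surj_aux (s : Finset ℕ) (a : ℕ) (ha : a ∈ s) : ∃ i < s.card, nth s i = a := by
  have : a ∈ Set.range (s.orderEmbOfFin rfl) := by
    rw [Finset.range_orderEmbOfFin]; exact ha
  obtain ⟨⟨i, hi⟩, h⟩ := this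
  exact ⟨i, hi, by rw [nth_eq_aux s i hi, h]⟩

lemma nth_inj_aux (s : Finset ℕ) (i j : ℕ) (hi : i < s.card) (hj : j < s.card)
    (h : nth s i = nth s j) : i = j := by
  rcases lt_trichotomy i j with h1 | h1 | h1
  · have := nth_lt_aux s i j hj h1; omega
  · exact h1
  · have := nth_lt_aux s j i hi h1; omega

lemma nth_count_aux (s : Finset ℕ) (i : ℕ) (hi : i < s.card) :
    (s.filter (fun a => a < nth s i)).card = i := by
  have : s.filter (fun a => a < nth s i) = (Finset.range i).image (nth s) := by
    ext a
    simp only [Finset.mem_filter, Finset.mem_image, Finset.mem_range]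
    constructor
    · rintro ⟨ha, hlt⟩
      obtain ⟨k, hk, rfl⟩ := nth_surj_aux s a ha
      refine ⟨k, ?_, rfl⟩
      by_contra hcon
      rcases Nat.lt_or_ge i k with h1 | h1
      · have := nth_lt_aux s i k hk h1; omega
      · have : k = i := by omega
        subst this; omega
    · rintro ⟨k, hk, rfl⟩
      exact ⟨nth_mem_aux s k (hk.trans hi), nth_lt_aux s k i hi hk⟩
  rw [this, Finset.card_image_of_injOn, Finset.card_range]
  intro a ha b hb hab
  simp only [Finset.coe_range, Set.mem_Iio] at ha hb
  exact nth_inj_aux s a b (ha.trans hi) (hb.trans hi) hab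

lemma nth_image_aux (z p x : Finset ℕ) (hp : ∀ a ∈ p, a < z.card)
    (hx : p.image (nth z) = x) (hc : x.card = p.card) (i : ℕ) (hi : i < p.card) :
    nth x i = nth z (nth p i) := by
  rw [nth_eq_aux x i (by omega)]
  have key := Finset.orderEmbOfFin_unique (s := x) (k := x.card) rfl
    (f := fun k : Fin x.card => nth z (nth p k))
    (fun k => by
      exact hx.subset (Finset.mem_image_of_mem _ (nth_mem_aux p k (by have := k.2; omega))))
    (fun a b hab => by
      have hb : (b : ℕ) < p.card := by have := b.2; omega
      exact nth_lt_aux z _ _ (hp _ (nth_mem_aux p b hb)) (nth_lt_aux p a b hb hab))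
  exact (congrFun key ⟨i, by omega⟩).symm

/-- if `x →_{pq} y` then for `i, j < n`:
`x_[i] = y_[j]` iff `i ∈ dom φ_{pq}` (i.e. `p_[i] ∈ q`) and `φ_{pq}(i) = j`
(i.e. the number of elements of `q` below `p_[i]` equals `j`). -/
theorem stmt_10 (n : ℕ) (hn : 1 ≤ n) (X : Set ℕ)
    (p q : Finset ℕ) (hp : p ∈ idx n) (hq : q ∈ idx n)
    (x y : Finset ℕ) (hx : ↑x ⊆ X) (hxc : x.card = n) (hy : ↑y ⊆ X) (hyc : y.card = n)
    (harr : Arrow X n p q x y) (i j : ℕ) (hi : i < n) (hj : j < n) :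
    nth x i = nth y j ↔ (nth p i ∈ q ∧ (q.filter (fun a => a < nth p i)).card = j) := by
  obtain ⟨z, -, hz, hpx, hqy⟩ := harr
  simp only [idx, Finset.mem_powersetCard] at hp hq
  obtain ⟨hp, hpc⟩ := hp
  obtain ⟨hq, hqc⟩ := hq
  have hp' : ∀ a ∈ p, a < z.card := fun a ha => by
    have := Finset.mem_range.1 (hp ha); omega
  have hq' : ∀ a ∈ q, a < z.card := fun a ha => by
    have := Finset.mem_range.1 (hq ha); omega
  have hip : i < p.card := by omega
  have hjq : j < q.card := by omega
  rw [nth_image_aux z p x hp' hpx (by omega) i hip,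
    nth_image_aux z q y hq' hqy (by omega) j hjq]
  constructor
  · intro h
    have h2 := nth_inj_aux z _ _ (hp' _ (nth_mem_aux p i hip)) (hq' _ (nth_mem_aux q j hjq)) h
    rw [h2]
    exact ⟨nth_mem_aux q j hjq, nth_count_aux q j hjq⟩
  · rintro ⟨hm, hc⟩
    obtain ⟨k, hk, hk2⟩ := nth_surj_aux q _ hm
    rw [← hk2, nth_count_aux q k hk] at hc
    rw [← hk2, hc]
end
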